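/- Milnor's example fails the strong Milnor condition: let P(x,y) = x and Q(x,y) = x² + y(x² + y²) on ℝ², and ω = P∇Q − Q∇P. Then for every ε > 0 there exists a point p = (x,y) ∈ ℝ² with 0 < ‖p‖ < ε, f(p) = (P(p),Q(p)) ≠ (0,0), and ω(p) = λ·p for some real λ; i.e., the projection f/‖f‖ restricted to the sphere of radius ‖p‖ has a critical point at p, so such critical points occur on spheres of arbitrarily small radius (the curve r = sin θ · cos² θ in polar coordinates consists of such points). -/

import Mathlib

/-!
Write `r = ‖p‖`, so that `Q = x² + y r²`. Since `∇P = e₀` and `∇Q = 2x e₀ + r² e₁ + 2y p`,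
the radial term `2xy p` drops out of the cross product of `p` with `ω = P ∇Q - Q ∇P`, which
comes out as `r⁴ - x² y`. Its zero set is the curve `r = sin θ cos² θ`, which runs into the
origin as `θ → 0⁺`, while `P = r cos θ` stays positive along it.
-/

open Real
open scoped ComplexConjugate Gradient

section GradientCalculus

variable {𝕜 F : Type*} [RCLike 𝕜] [NormedAddCommGroup F] [InnerProductSpace 𝕜 F] [CompleteSpace F]
  {f g : F → 𝕜} {f' g' x : F}

theorem hasGradientAt_add (hf : HasGradientAt f f' x) (hg : HasGradientAt g g' x) :
    HasGradientAt (fun y => f y + g y) (f' + g') x := by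
  rw [hasGradientAt_iff_hasFDerivAt, map_add]
  exact hf.hasFDerivAt.add hg.hasFDerivAt

theorem hasGradientAt_mul (hf : HasGradientAt f f' x) (hg : HasGradientAt g g' x) :
    HasGradientAt (fun y => f y * g y) (conj (f x) • g' + conj (g x) • f') x := by
  rw [hasGradientAt_iff_hasFDerivAt]
  refine (hf.hasFDerivAt.mul hg.hasFDerivAt).congr_fderiv ?_
  simp only [map_add, map_smulₛₗ, RCLike.conj_conj]

theorem hasGradientAt_coord {ι : Type*} [Fintype ι] [DecidableEq ι] (i : ι)
    (p : EuclideanSpace 𝕜 ι) :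
    HasGradientAt (fun y : EuclideanSpace 𝕜 ι => y i) (EuclideanSpace.single i 1) p := by
  rw [hasGradientAt_iff_hasFDerivAt]
  refine (EuclideanSpace.proj i : EuclideanSpace 𝕜 ι →L[𝕜] 𝕜).hasFDerivAt.congr_fderiv ?_
  ext v
  simp [EuclideanSpace.inner_single_left]

end GradientCalculus

theorem hasGradientAt_norm_sq {E : Type*} [NormedAddCommGroup E] [InnerProductSpace ℝ E]
    [CompleteSpace E] (p : E) : HasGradientAt (fun y : E => ‖y‖ ^ 2) ((2 : ℝ) • p) p := by
  rw [hasGradientAt_iff_hasFDerivAt]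
  refine (hasStrictFDerivAt_norm_sq p).hasFDerivAt.congr_fderiv ?_
  ext v
  simp [two_smul]

theorem exists_eq_smul_iff_forall_mul_eq_mul {ι K : Type*} [Field K] {v w : ι → K} (hw : w ≠ 0) :
    (∃ c : K, v = c • w) ↔ ∀ i j, w i * v j = w j * v i := by
  constructor
  · rintro ⟨c, rfl⟩ i j
    simp only [Pi.smul_apply, smul_eq_mul]
    ring
  · intro h
    obtain ⟨i, hi⟩ := Function.ne_iff.mp hw
    refine ⟨v i / w i, funext fun j => ?_⟩
    rw [Pi.smul_apply, smul_eq_mul, div_mul_eq_mul_div, eq_div_iff hi, mul_comm (v j), h i j,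
      mul_comm]

theorem exists_eq_smul_iff_of_fin_two {𝕜 : Type*} [RCLike 𝕜] {v w : EuclideanSpace 𝕜 (Fin 2)}
    (hw : w ≠ 0) : (∃ c : 𝕜, v = c • w) ↔ w 0 * v 1 = w 1 * v 0 := by
  have hw' : w.ofLp ≠ 0 := by simpa using hw
  simp only [← (WithLp.ofLp_injective 2).eq_iff, WithLp.ofLp_smul,
    exists_eq_smul_iff_forall_mul_eq_mul hw', Fin.forall_fin_two, true_and, and_true]
  exact ⟨fun h => h.1, fun h => ⟨h, h.symm⟩⟩

/-- The vector field `ω = P ∇Q - Q ∇P` of a pair of real functions on a Hilbert space. Where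
`f = (P, Q)` is differentiable and nonzero, `ω = ‖f‖² ∇(arg f)`, so `f / ‖f‖`
restricted to a sphere around the origin is critical exactly where `ω` is radial. -/
noncomputable def angularField {E : Type*} [NormedAddCommGroup E] [InnerProductSpace ℝ E]
    [CompleteSpace E] (P Q : E → ℝ) (p : E) : E :=
  P p • ∇ Q p - Q p • ∇ P p

/-- The second component `x² + y (x² + y²)` of Milnor's example, with `x² + y²` written as a
squared norm. -/
noncomputable def milnorQ (p : EuclideanSpace ℝ (Fin 2)) : ℝ :=
  p 0 ^ 2 + p 1 * ‖p‖ ^ 2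

theorem norm_sq_fin_two (p : EuclideanSpace ℝ (Fin 2)) : ‖p‖ ^ 2 = p 0 ^ 2 + p 1 ^ 2 := by
  rw [EuclideanSpace.real_norm_sq_eq, Fin.sum_univ_two]

theorem hasGradientAt_milnorQ (p : EuclideanSpace ℝ (Fin 2)) :
    HasGradientAt milnorQ
      ((2 * p 0) • EuclideanSpace.single 0 1 + ‖p‖ ^ 2 • EuclideanSpace.single 1 1
        + (2 * p 1) • p) p := by
  have hx := hasGradientAt_coord (𝕜 := ℝ) 0 p
  have hy := hasGradientAt_coord (𝕜 := ℝ) 1 p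
  have hQ := hasGradientAt_add (hasGradientAt_mul hx hx)
    (hasGradientAt_mul hy (hasGradientAt_norm_sq p))
  simp only [← pow_two, conj_trivial] at hQ
  convert hQ using 1
  · rfl
  · module

theorem angularField_milnor (p : EuclideanSpace ℝ (Fin 2)) :
    angularField (fun q => q 0) milnorQ p =
      (p 0 ^ 2 - p 1 * ‖p‖ ^ 2) • EuclideanSpace.single 0 1
        + (p 0 * ‖p‖ ^ 2) • EuclideanSpace.single 1 1 + (2 * p 0 * p 1) • p := by
  rw [angularField, (hasGradientAt_coord 0 p).gradient, (hasGradientAt_milnorQ p).gradient,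
    milnorQ]
  module

theorem cross_angularField_milnor (p : EuclideanSpace ℝ (Fin 2)) :
    p 0 * angularField (fun q => q 0) milnorQ p 1 - p 1 * angularField (fun q => q 0) milnorQ p 0 =
      ‖p‖ ^ 4 - p 0 ^ 2 * p 1 := by
  have hω₀ : angularField (fun q => q 0) milnorQ p 0 =
      p 0 ^ 2 - p 1 * ‖p‖ ^ 2 + 2 * p 0 * p 1 * p 0 := by
    simp [angularField_milnor]
  have hω₁ : angularField (fun q => q 0) milnorQ p 1 =
      p 0 * ‖p‖ ^ 2 + 2 * p 0 * p 1 * p 1 := by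
    simp [angularField_milnor]
  rw [hω₀, hω₁]
  linear_combination -‖p‖ ^ 2 * norm_sq_fin_two p

theorem angularField_milnor_radial_iff (p : EuclideanSpace ℝ (Fin 2)) :
    (∃ c : ℝ, angularField (fun q => q 0) milnorQ p = c • p) ↔ ‖p‖ ^ 4 = p 0 ^ 2 * p 1 := by
  rcases eq_or_ne p 0 with rfl | hp
  · simp [angularField, milnorQ]
  · rw [exists_eq_smul_iff_of_fin_two hp, ← sub_eq_zero, cross_angularField_milnor, sub_eq_zero]

/-- The curve `r = sin θ cos² θ` in polar coordinates, parametrized by the angle `θ`. At its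
points the field `ω` of Milnor's example is radial. -/
noncomputable def milnorCurve (θ : ℝ) : EuclideanSpace ℝ (Fin 2) :=
  (sin θ * cos θ ^ 2) • !₂[cos θ, sin θ]

theorem norm_milnorCurve (θ : ℝ) : ‖milnorCurve θ‖ = |sin θ * cos θ ^ 2| := by
  have hunit : ‖!₂[cos θ, sin θ]‖ = 1 := by
    simp [EuclideanSpace.norm_eq]
  rw [milnorCurve, norm_smul, hunit, mul_one, norm_eq_abs]

theorem norm_milnorCurve_le (θ : ℝ) : ‖milnorCurve θ‖ ≤ |θ| := by
  rw [norm_milnorCurve, abs_mul, abs_of_nonneg (sq_nonneg (cos θ))]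
  exact (mul_le_of_le_one_right (abs_nonneg _) (cos_sq_le_one θ)).trans (abs_sin_le_abs)

theorem milnorCurve_apply_zero_pos {θ : ℝ} (h₀ : 0 < θ) (h₁ : θ < π / 2) :
    0 < milnorCurve θ 0 := by
  have hsin : 0 < sin θ := sin_pos_of_pos_of_lt_pi h₀ (by linarith)
  have hcos : 0 < cos θ := cos_pos_of_mem_Ioo ⟨by linarith, h₁⟩
  simp only [milnorCurve, PiLp.smul_apply, Matrix.cons_val_zero, smul_eq_mul]
  positivity

theorem norm_milnorCurve_pow_four (θ : ℝ) :
    ‖milnorCurve θ‖ ^ 4 = milnorCurve θ 0 ^ 2 * milnorCurve θ 1 := by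
  have hx : milnorCurve θ 0 = sin θ * cos θ ^ 2 * cos θ := rfl
  have hy : milnorCurve θ 1 = sin θ * cos θ ^ 2 * sin θ := rfl
  rw [norm_milnorCurve, Even.pow_abs (by decide), hx, hy]
  ring

/-- Milnor's example. For `P (x,y) = x` and
`Q (x,y) = x² + y(x² + y²)` on `ℝ²`, with `ω = P ∇Q − Q ∇P`, every ball around the origin
contains a point `p ≠ 0` with `f p ≠ 0` at which `ω p` is a scalar multiple of `p`; hence
critical points of `f/‖f‖` restricted to spheres occur on spheres of arbitrarily small
radius. -/
theorem milnor_example_critical_points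
    (P Q : EuclideanSpace ℝ (Fin 2) → ℝ)
    (hPdef : ∀ x : EuclideanSpace ℝ (Fin 2), P x = x 0)
    (hQdef : ∀ x : EuclideanSpace ℝ (Fin 2),
      Q x = (x 0) ^ 2 + x 1 * ((x 0) ^ 2 + (x 1) ^ 2)) :
    ∀ ε : ℝ, 0 < ε → ∃ p : EuclideanSpace ℝ (Fin 2),
      0 < ‖p‖ ∧ ‖p‖ < ε ∧ ¬(P p = 0 ∧ Q p = 0) ∧
      ∃ lam : ℝ, P p • gradient Q p - Q p • gradient P p = lam • p := by
  intro ε hε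
  obtain rfl : P = fun q => q 0 := funext hPdef
  obtain rfl : Q = milnorQ := funext fun q => by rw [hQdef, milnorQ, norm_sq_fin_two]
  obtain ⟨θ, hθ, hθ_lt⟩ := exists_between (lt_min hε (half_pos pi_pos))
  obtain ⟨hθε, hθπ⟩ := lt_min_iff.mp hθ_lt
  have hx : 0 < milnorCurve θ 0 := milnorCurve_apply_zero_pos hθ hθπ
  refine ⟨milnorCurve θ, ?_, ?_, fun h => hx.ne' h.1, ?_⟩
  · exact norm_pos_iff.mpr fun h => hx.ne' (by rw [h, PiLp.zero_apply])
  · exact (norm_milnorCurve_le θ).trans_lt (by rwa [abs_of_pos hθ])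
  · exact (angularField_milnor_radial_iff _).mpr (norm_milnorCurve_pow_four θ)
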